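/- For a geodesic ray b in a proper CAT(0) space, the following are equivalent: (1) b is κ-contracting; (2) the κ-lower divergence of b is superlinear; (3) the κ-lower divergence of b is at least quadratic; (4) b is κ-slim. -/

import Mathlib

open Set Metric Filter ENNReal

noncomputable section

/-- The set of points lying on a geodesic from `x` to `y`; in a uniquely geodesic space
(such as a CAT(0) space) this is the geodesic segment `[x,y]`. -/
def seg {X : Type*} [MetricSpace X] (x y : X) : Set X :=
  {z | dist x z + dist z y = dist x y}

/-- `X` is a geodesic metric space. -/
def GeodesicSpace (X : Type*) [MetricSpace X] : Prop :=
  ∀ x y : X, ∃ γ : ℝ → X, γ 0 = x ∧ γ (dist x y) = y ∧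
    ∀ s ∈ Icc (0:ℝ) (dist x y), ∀ t ∈ Icc (0:ℝ) (dist x y), dist (γ s) (γ t) = |s - t|

/-- `X` is a CAT(0) space: a geodesic metric space satisfying the CN (Bruhat–Tits)
inequality (comparison of triangles with Euclidean ones). -/
def IsCAT0 (X : Type*) [MetricSpace X] : Prop :=
  GeodesicSpace X ∧ ∀ x y z m : X, dist y m = dist y z / 2 → dist m z = dist y z / 2 →
    dist x m ^ 2 ≤ (dist x y ^ 2 + dist x z ^ 2) / 2 - dist y z ^ 2 / 4

/-- `b` restricted to `[0,∞)` is a geodesic ray (an isometric embedding of `[0,∞)`). -/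
def IsGeodesicRay {X : Type*} [MetricSpace X] (b : ℝ → X) : Prop :=
  ∀ s t : ℝ, 0 ≤ s → 0 ≤ t → dist (b s) (b t) = |s - t|

/-- The image of the geodesic ray `b`. -/
def rayIm {X : Type*} [MetricSpace X] (b : ℝ → X) : Set X := b '' Ici 0

/-- `κ` is a sublinear function: monotone increasing, concave, `≥ 1`, with `κ(t)/t → 0`. -/
structure IsSublinearFn (κ : ℝ → ℝ) : Prop where
  one_le : ∀ t : ℝ, 1 ≤ κ t
  mono : Monotone κ
  concave : ConcaveOn ℝ (Ici 0) κ
  sublinear : Tendsto (fun t => κ t / t) atTop (nhds 0)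

/-- `π` is the nearest-point projection onto the geodesic ray `b`:
`π x` lies on `b` and realizes the distance from `x` to `b`. -/
def IsProj {X : Type*} [MetricSpace X] (b : ℝ → X) (π : X → X) : Prop :=
  ∀ x : X, π x ∈ rayIm b ∧ dist x (π x) = infDist x (rayIm b)

/-- The geodesic ray `b` (with projection `π`) is `κ`-contracting: there is `c ≥ 0` such
that whenever `d(x,y) ≤ d(x,b)` we have `d(x_b, y_b) ≤ c·κ(‖x‖)`. -/
def KappaContracting {X : Type*} [MetricSpace X] (κ : ℝ → ℝ) (o : X) (b : ℝ → X)
    (π : X → X) : Prop :=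
  ∃ c ≥ (0:ℝ), ∀ x y : X, dist x y ≤ infDist x (rayIm b) →
    dist (π x) (π y) ≤ c * κ (dist o x)

/-- `b` is `κ`-contracting with contracting constant `c` (projection form, Lemma 2.6):
whenever `d(x,y) < d(x,b)` we have `d(x_b, y_b) ≤ c·κ(‖x_b‖)`. -/
def KappaContractingWith {X : Type*} [MetricSpace X] (κ : ℝ → ℝ) (o : X) (b : ℝ → X)
    (π : X → X) (c : ℝ) : Prop :=
  0 ≤ c ∧ ∀ x y : X, dist x y < infDist x (rayIm b) →
    dist (π x) (π y) ≤ c * κ (dist o (π x))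

/-- κ-slim condition 1: `d(x_b, [x,y]) ≤ c·κ(‖x_b‖)` for all `x ∈ X`, `y ∈ im(b)`. -/
def SlimCond1 {X : Type*} [MetricSpace X] (κ : ℝ → ℝ) (o : X) (b : ℝ → X) (π : X → X) : Prop :=
  ∃ c ≥ (0:ℝ), ∀ x : X, ∀ y ∈ rayIm b, infDist (π x) (seg x y) ≤ c * κ (dist o (π x))

/-- κ-slim condition 2: `d(x_b, [x,y]) ≤ c·κ(‖z‖)` for some `z` on `b` between `x_b` and `y`. -/
def SlimCond2 {X : Type*} [MetricSpace X] (κ : ℝ → ℝ) (o : X) (b : ℝ → X) (π : X → X) : Prop :=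
  ∃ c ≥ (0:ℝ), ∀ x : X, ∀ y ∈ rayIm b, ∃ z ∈ rayIm b ∩ seg (π x) y,
    infDist (π x) (seg x y) ≤ c * κ (dist o z)

/-- κ-slim condition 3: for `x y z` with `[y,z] ⊆ im(b)` and `w ∈ [y,z]`,
`d(w, [y,x] ∪ [x,z]) ≤ c·κ(‖x_b‖)`. -/
def SlimCond3 {X : Type*} [MetricSpace X] (κ : ℝ → ℝ) (o : X) (b : ℝ → X) (π : X → X) : Prop :=
  ∃ c ≥ (0:ℝ), ∀ x y z : X, seg y z ⊆ rayIm b →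
    ∀ w ∈ seg y z, infDist w (seg y x ∪ seg x z) ≤ c * κ (dist o (π x))

/-- κ-slim condition 4: for `x ∈ X` and `[y,z] ⊆ im(b)` with `‖y‖ ≤ ‖x_b‖ ≤ ‖z‖` and
`w ∈ [y,z]`, `d(w, [y,x] ∪ [x,z]) ≤ c·κ(‖z‖)`. -/
def SlimCond4 {X : Type*} [MetricSpace X] (κ : ℝ → ℝ) (o : X) (b : ℝ → X) (π : X → X) : Prop :=
  ∃ c ≥ (0:ℝ), ∀ x y z : X, seg y z ⊆ rayIm b →
    dist o y ≤ dist o (π x) → dist o (π x) ≤ dist o z →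
    ∀ w ∈ seg y z, infDist w (seg y x ∪ seg x z) ≤ c * κ (dist o z)

/-- The set of (continuous, rectifiable-or-not) paths from `b(t - r·κ(t))` to
`b(t + r·κ(t))` avoiding the open ball of radius `r·κ(t)` about `b(t)`. -/
def pathsOutside {X : Type*} [MetricSpace X] (κ : ℝ → ℝ) (b : ℝ → X) (r t : ℝ) :
    Set (ℝ → X) :=
  {γ | ContinuousOn γ (Icc 0 1) ∧ γ 0 = b (t - r * κ t) ∧ γ 1 = b (t + r * κ t) ∧
       ∀ s ∈ Icc (0:ℝ) 1, γ s ∉ ball (b t) (r * κ t)}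

/-- `ρ_κ(r,t)`: the infimum of the lengths of paths from `b(t - r·κ(t))` to
`b(t + r·κ(t))` lying outside the open ball of radius `r·κ(t)` about `b(t)`
(`∞` if there is no such path). -/
noncomputable def rhoKappa {X : Type*} [MetricSpace X] (κ : ℝ → ℝ) (b : ℝ → X)
    (r t : ℝ) : ℝ≥0∞ :=
  ⨅ γ ∈ pathsOutside κ b r t, eVariationOn γ (Icc 0 1)

/-- The κ-lower divergence `div_κ(r) = inf_{t > r·κ(t)} ρ_κ(r,t)/κ(t)`. -/
noncomputable def divKappa {X : Type*} [MetricSpace X] (κ : ℝ → ℝ) (b : ℝ → X)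
    (r : ℝ) : ℝ≥0∞ :=
  ⨅ t ∈ {t : ℝ | r * κ t < t}, rhoKappa κ b r t / ENNReal.ofReal (κ t)

/-- `m` is the point at fraction `s` between `y` and `z`. -/
def AtFrac {X : Type*} [MetricSpace X] (s : ℝ) (y z m : X) : Prop :=
  dist y m = s * dist y z ∧ dist m z = (1 - s) * dist y z

lemma midconvex_nonpos (G : ℝ → ℝ) (hc : ContinuousOn G (Icc 0 1))
    (hm : ∀ s ∈ Icc (0:ℝ) 1, ∀ u ∈ Icc (0:ℝ) 1, G ((s + u) / 2) ≤ (G s + G u) / 2)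
    (h0 : G 0 ≤ 0) (h1 : G 1 ≤ 0) : ∀ s ∈ Icc (0:ℝ) 1, G s ≤ 0 := by
  intro s hs
  by_contra hpos
  push Not at hpos
  obtain ⟨s0, hs0, hmax⟩ := isCompact_Icc.exists_isMaxOn ⟨s, hs⟩ hc
  have hM : 0 < G s0 := lt_of_lt_of_le hpos (hmax hs)
  have hcl : IsClosed (Icc (0:ℝ) 1 ∩ G ⁻¹' {G s0}) :=
    hc.preimage_isClosed_of_isClosed isClosed_Icc isClosed_singleton
  have hcomp : IsCompact (Icc (0:ℝ) 1 ∩ G ⁻¹' {G s0}) :=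
    isCompact_Icc.of_isClosed_subset hcl inter_subset_left
  obtain ⟨s1, hs1, hleast⟩ := hcomp.exists_isLeast ⟨s0, hs0, rfl⟩
  have e1 : G s1 = G s0 := hs1.2
  have p0 : 0 < s1 := by
    rcases hs1.1.1.eq_or_lt with h | h
    · rw [← h] at e1; linarith
    · exact h
  have p1 : s1 < 1 := by
    rcases hs1.1.2.eq_or_lt with h | h
    · rw [h] at e1; linarith
    · exact h
  set δ := min s1 (1 - s1) with hδ
  have d0 : 0 < δ := lt_min p0 (by linarith)
  have d1 : δ ≤ s1 := min_le_left _ _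
  have d2 : δ ≤ 1 - s1 := min_le_right _ _
  have hl : s1 - δ ∈ Icc (0:ℝ) 1 := ⟨by linarith, by linarith⟩
  have hr : s1 + δ ∈ Icc (0:ℝ) 1 := ⟨by linarith, by linarith⟩
  have k1 : G (s1 - δ) < G s0 := by
    refine lt_of_le_of_ne (hmax hl) ?_
    intro h
    have := hleast ⟨hl, h⟩
    linarith
  have k2 : G (s1 + δ) ≤ G s0 := hmax hr
  have k3 := hm _ hl _ hr
  have : (s1 - δ + (s1 + δ)) / 2 = s1 := by ring
  rw [this] at k3
  linarith

section cat
variable {X : Type*} [MetricSpace X]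

lemma exists_frac (hX : IsCAT0 X) (y z : X) {s : ℝ} (h0 : 0 ≤ s) (h1 : s ≤ 1) :
    ∃ m, AtFrac s y z m := by
  obtain ⟨γ, g0, g1, hg⟩ := hX.1 y z
  have hd : 0 ≤ dist y z := dist_nonneg
  have a1 : (0:ℝ) ∈ Icc (0:ℝ) (dist y z) := ⟨le_rfl, hd⟩
  have a2 : dist y z ∈ Icc (0:ℝ) (dist y z) := ⟨hd, le_rfl⟩
  have a3 : s * dist y z ∈ Icc (0:ℝ) (dist y z) :=
    ⟨by positivity, mul_le_of_le_one_left hd h1⟩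
  refine ⟨γ (s * dist y z), ?_, ?_⟩
  · have := hg _ a1 _ a3
    rw [g0] at this
    rw [this, zero_sub, abs_neg, abs_of_nonneg a3.1]
  · have := hg _ a3 _ a2
    rw [g1] at this
    rw [this, abs_sub_comm, abs_of_nonneg (by linarith [a3.2])]
    ring

lemma exists_mid (hX : IsCAT0 X) (y z : X) :
    ∃ m, dist y m = dist y z / 2 ∧ dist m z = dist y z / 2 := by
  obtain ⟨m, h1, h2⟩ := exists_frac hX y z (s := 1/2) (by norm_num) (by norm_num)
  exact ⟨m, by linarith, by linarith⟩

lemma frac_unique (hX : IsCAT0 X) {y z m m' : X} {s : ℝ}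
    (h : AtFrac s y z m) (h' : AtFrac s y z m') : m = m' := by
  obtain ⟨n, n1, n2⟩ := exists_mid hX m m'
  have c1 := hX.2 y m m' n n1 n2
  have c2 := hX.2 z m m' n n1 n2
  rw [h.1, h'.1] at c1
  rw [dist_comm z m, dist_comm z m', h.2, h'.2] at c2
  have t := dist_triangle y n z
  rw [dist_comm n z] at t
  by_contra hne
  have hp : 0 < dist m m' := dist_pos.mpr hne
  have q1 : 0 ≤ s * dist y z := h.1 ▸ dist_nonneg
  have q2 : 0 ≤ (1 - s) * dist y z := h.2 ▸ dist_nonneg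
  have r1 : dist y n < s * dist y z := by
    apply lt_of_pow_lt_pow_left₀ 2 q1
    nlinarith
  have r2 : dist z n < (1 - s) * dist y z := by
    apply lt_of_pow_lt_pow_left₀ 2 q2
    nlinarith
  nlinarith

lemma stewart (hX : IsCAT0 X) (x : X) {y z m : X} {s : ℝ} (h0 : 0 ≤ s) (h1 : s ≤ 1)
    (h : AtFrac s y z m) :
    dist x m ^ 2 ≤ (1 - s) * dist x y ^ 2 + s * dist x z ^ 2 - s * (1 - s) * dist y z ^ 2 := by
  obtain ⟨γ, g0, g1, hg⟩ := hX.1 y z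
  set l := dist y z with hl
  have hd : 0 ≤ l := dist_nonneg
  have mem : ∀ u ∈ Icc (0:ℝ) 1, u * l ∈ Icc (0:ℝ) l := fun u hu =>
    ⟨mul_nonneg hu.1 hd, mul_le_of_le_one_left hd hu.2⟩
  have a1 : (0:ℝ) ∈ Icc (0:ℝ) l := ⟨le_rfl, hd⟩
  have a2 : l ∈ Icc (0:ℝ) l := ⟨hd, le_rfl⟩
  have a3 := mem s ⟨h0, h1⟩
  have hm : m = γ (s * l) := by
    refine frac_unique hX h ⟨?_, ?_⟩
    · have := hg _ a1 _ a3
      rw [g0] at this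
      rw [this, zero_sub, abs_neg, abs_of_nonneg a3.1]
    · have := hg _ a3 _ a2
      rw [g1] at this
      rw [this, abs_sub_comm, abs_of_nonneg (by linarith [a3.2])]
      ring
  have key := midconvex_nonpos
    (fun u => dist x (γ (u * l)) ^ 2 -
      ((1 - u) * dist x y ^ 2 + u * dist x z ^ 2 - u * (1 - u) * l ^ 2)) ?_ ?_ ?_ ?_ s ⟨h0, h1⟩
  · rw [hm]
    linarith
  · have hγ : ContinuousOn γ (Icc 0 l) := by
      have : LipschitzOnWith 1 γ (Icc 0 l) := by
        apply LipschitzOnWith.of_dist_le_mul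
        intro a ha c hc
        rw [hg a ha c hc, Real.dist_eq]; simp
      exact this.continuousOn
    have h2 : ContinuousOn (fun u => γ (u * l)) (Icc 0 1) :=
      hγ.comp (by fun_prop) mem
    have h3 : ContinuousOn (fun u => dist x (γ (u * l))) (Icc 0 1) :=
      (continuous_const.dist continuous_id).comp_continuousOn h2
    apply ContinuousOn.sub (h3.pow 2)
    fun_prop
  · intro u hu v hv
    have hw : (u + v) / 2 ∈ Icc (0:ℝ) 1 := ⟨by linarith [hu.1, hv.1], by linarith [hu.2, hv.2]⟩
    have e1 := hg _ (mem u hu) _ (mem _ hw)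
    have e2 := hg _ (mem _ hw) _ (mem v hv)
    have e3 := hg _ (mem u hu) _ (mem v hv)
    have f1 : u * l - (u + v) / 2 * l = (u * l - v * l) / 2 := by ring
    have f2 : (u + v) / 2 * l - v * l = (u * l - v * l) / 2 := by ring
    rw [f1, abs_div, abs_two] at e1
    rw [f2, abs_div, abs_two] at e2
    have cn := hX.2 x _ _ _ (e1.trans (by rw [e3])) (e2.trans (by rw [e3]))
    rw [e3, sq_abs] at cn
    nlinarith
  · simp [g0]
  · simp [g1]

lemma quad (hX : IsCAT0 X) (p q r t : X) :
    dist p r ^ 2 + dist q t ^ 2 ≤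
      dist p q ^ 2 + dist q r ^ 2 + dist r t ^ 2 + dist t p ^ 2 := by
  obtain ⟨m, m1, m2⟩ := exists_mid hX q t
  have c1 := hX.2 p q t m m1 m2
  have c2 := hX.2 r q t m m1 m2
  have tr := dist_triangle_right p r m
  rw [dist_comm q r, dist_comm t p]
  have h0 : 0 ≤ dist p r := dist_nonneg
  have : dist p r ^ 2 ≤ (dist p m + dist r m) ^ 2 := by gcongr
  nlinarith [sq_nonneg (dist p m - dist r m)]

lemma AtFrac.symm {y z m : X} {s : ℝ} (h : AtFrac s y z m) : AtFrac (1 - s) z y m := by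
  refine ⟨?_, ?_⟩
  · rw [dist_comm z m, dist_comm z y, h.2]
  · rw [dist_comm m y, dist_comm z y, h.1]; ring

lemma homothety (hX : IsCAT0 X) {a u v u' v' : X} {s : ℝ} (h0 : 0 ≤ s) (h1 : s ≤ 1)
    (hu : AtFrac s a u u') (hv : AtFrac s a v v') : dist u' v' ≤ s * dist u v := by
  have k1 := stewart hX u' h0 h1 hv
  have k2 := stewart hX v h0 h1 hu
  rw [dist_comm u' a, hu.1, dist_comm u' v] at k1
  rw [dist_comm v a, dist_comm v u] at k2
  apply le_of_sq_le_sq _ (by positivity)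
  have := mul_le_mul_of_nonneg_left k2 h0
  nlinarith

lemma busemann (hX : IsCAT0 X) {p0 p1 q0 q1 p q : X} {s : ℝ} (h0 : 0 ≤ s) (h1 : s ≤ 1)
    (hp : AtFrac s p0 p1 p) (hq : AtFrac s q0 q1 q) :
    dist p q ≤ (1 - s) * dist p0 q0 + s * dist p1 q1 := by
  obtain ⟨r, hr⟩ := exists_frac hX p0 q1 h0 h1
  have k1 := homothety hX h0 h1 hp hr
  have k2 := homothety hX (by linarith) (by linarith) hr.symm hq.symm
  have := dist_triangle p r q
  linarith

/-- Pythagoras: foot of the perpendicular. -/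
lemma pyth (hX : IsCAT0 X) {x p y : X}
    (h : ∀ s : ℝ, 0 < s → s < 1 → ∃ n, AtFrac s p y n ∧ dist x p ≤ dist x n) :
    dist x p ^ 2 + dist p y ^ 2 ≤ dist x y ^ 2 := by
  have key : ∀ s : ℝ, 0 < s → s < 1 →
      dist x p ^ 2 + dist p y ^ 2 ≤ dist x y ^ 2 + s * dist p y ^ 2 := by
    intro s s0 s1
    obtain ⟨n, hn, hle⟩ := h s s0 s1
    have k := stewart hX x s0.le s1.le hn
    have : dist x p ^ 2 ≤ dist x n ^ 2 := by gcongr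
    have k2 : s * (dist x p ^ 2 + dist p y ^ 2) ≤ s * (dist x y ^ 2 + s * dist p y ^ 2) := by
      nlinarith
    exact le_of_mul_le_mul_left k2 s0
  by_contra hlt
  push Not at hlt
  set e := dist x p ^ 2 + dist p y ^ 2 - dist x y ^ 2 with he
  have hepos : 0 < e := by linarith
  set Q := dist p y ^ 2 with hQ
  have hQ0 : 0 ≤ Q := sq_nonneg _
  have k := key (min (1/2) (e / (2 * (Q + 1)))) (by positivity)
    (lt_of_le_of_lt (min_le_left _ _) (by norm_num))
  have h2 : min (1/2) (e / (2 * (Q + 1))) * Q ≤ e / (2 * (Q + 1)) * Q := by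
    gcongr; exact min_le_right _ _
  have h3 : e / (2 * (Q + 1)) * Q ≤ e / 2 := by
    rw [div_mul_eq_mul_div, div_le_div_iff₀ (by positivity) (by positivity)]
    nlinarith
  linarith

set_option maxHeartbeats 1000000 in
/-- core estimate for slim ⇒ contracting -/
lemma slim_core (hX : IsCAT0 X) {x y p q : X} {K : ℝ}
    (hx : dist x p + dist p q - 2 * K ≤ dist x q)
    (hy : dist y q + dist p q - 2 * K ≤ dist y p)
    (hD : 100 * K ≤ dist p q) (hK : 0 < K)
    (hB : dist p q / 4 ≤ dist y q) (hBA : dist y q ≤ dist x p) : dist x p < dist x y := by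
  by_contra hle
  push Not at hle
  set A := dist x p with hA
  set B := dist y q with hBd
  set D := dist p q with hDd
  have hD0 : 0 < D := by linarith
  have hB0 : 0 < B := by linarith
  have hA0 : 0 < A := by linarith
  -- points at height D/4
  have f1 : D / 4 / A ≤ 1 := by rw [div_le_one hA0]; linarith
  have f2 : D / 4 / B ≤ 1 := by rw [div_le_one hB0]; linarith
  have f3 : B / A ≤ 1 := by rw [div_le_one hA0]; linarith
  obtain ⟨x1, hx1⟩ := exists_frac hX p x (s := B / A) (by positivity) f3
  obtain ⟨x2, hx2⟩ := exists_frac hX p x1 (s := D / 4 / B) (by positivity) f2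
  obtain ⟨y2, hy2⟩ := exists_frac hX q y (s := D / 4 / B) (by positivity) f2
  have bus := busemann hX (by positivity) f2 hx2 hy2
  obtain ⟨hx1a, hx1b⟩ := hx1
  obtain ⟨hx2a, hx2b⟩ := hx2
  obtain ⟨hy2a, hy2b⟩ := hy2
  have st := stewart hX y (by positivity) f3 ⟨hx1a, hx1b⟩
  rw [dist_comm p x, ← hA] at hx1a hx1b
  rw [dist_comm q y, ← hBd] at hy2a hy2b
  have i1 : dist p x1 = B := by rw [hx1a]; field_simp
  have i2 : dist x1 x = A - B := by rw [hx1b]; field_simp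
  rw [i1] at hx2a hx2b
  have i3 : dist p x2 = D / 4 := by rw [hx2a]; field_simp
  have i4 : dist x2 x1 = B - D / 4 := by rw [hx2b]; field_simp
  have i5 : dist q y2 = D / 4 := by rw [hy2a]; field_simp
  have i6 : dist y2 y = B - D / 4 := by rw [hy2b]; field_simp
  have l1 : D / 4 + D - 2 * K ≤ dist x2 q := by
    have := dist_triangle4 x x1 x2 q
    rw [dist_comm x x1, dist_comm x1 x2] at this
    linarith
  have l2 : D / 4 + D - 2 * K ≤ dist y2 p := by
    have := dist_triangle y y2 p
    rw [dist_comm y y2] at this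
    linarith
  have q2 := quad hX x2 y2 q p
  rw [dist_comm y2 q, i5, dist_comm q p, i3, ← hDd] at q2
  have m1 : (1.23 * D) ^ 2 ≤ dist x2 q ^ 2 := by
    apply pow_le_pow_left₀ (by positivity); linarith
  have m2 : (1.23 * D) ^ 2 ≤ dist y2 p ^ 2 := by
    apply pow_le_pow_left₀ (by positivity); linarith
  have m3 : 1.375 * D ≤ dist x2 y2 := by
    apply le_of_sq_le_sq _ dist_nonneg
    nlinarith
  have m4 : D + 1.5 * B ≤ dist x1 y := by
    have e : (1 - D / 4 / B) * dist p q + D / 4 / B * dist x1 y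
      = D + (D / 4 / B) * (dist x1 y - D) := by rw [← hDd]; ring
    rw [e] at bus
    have : 1.5 * B * (D / 4 / B) ≤ (dist x1 y - D) * (D / 4 / B) := by
      have : 1.5 * B * (D / 4 / B) = 0.375 * D := by field_simp; norm_num
      rw [this]; linarith
    have := le_of_mul_le_mul_right this (by positivity)
    linarith
  have m5 : (D + 1.5 * B) ^ 2 ≤ dist x1 y ^ 2 := by
    apply pow_le_pow_left₀ (by positivity) m4
  rw [dist_comm y x1, dist_comm p x, ← hA, dist_comm y x] at st
  have m6 : dist y p ≤ B + D := by
    have := dist_triangle y q p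
    rw [dist_comm q p] at this
    linarith
  have m7 : dist y p ^ 2 ≤ (B + D) ^ 2 := by gcongr
  have m8 : dist x y ^ 2 ≤ A ^ 2 := by gcongr
  have m9 : (1 - B / A) * dist y p ^ 2 ≤ (B + D) ^ 2 := by
    have : (1 - B / A) * dist y p ^ 2 ≤ 1 * dist y p ^ 2 := by
      gcongr
      have : 0 ≤ B / A := by positivity
      linarith
    linarith
  have m10 : B / A * dist x y ^ 2 ≤ B / A * A ^ 2 := by gcongr
  have m11 : B / A * A ^ 2 - B / A * (1 - B / A) * A ^ 2 = B ^ 2 := by field_simp; ring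
  have m12 : (D + 1.5 * B) ^ 2 ≤ (B + D) ^ 2 + B ^ 2 := by linarith
  nlinarith [mul_pos hD0 hB0, mul_pos hB0 hB0]

end cat
section kappa
variable {κ : ℝ → ℝ}

lemma kappa_scale (hκ : IsSublinearFn κ) {a s : ℝ} (ha : 0 ≤ a) (h0 : 0 ≤ s) (h1 : s ≤ 1) :
    s * κ a ≤ κ (s * a) := by
  have h := hκ.concave.2 (x := a) (y := 0) ha (by simp) h0 (sub_nonneg.mpr h1) (by ring)
  simp only [smul_eq_mul, mul_zero, add_zero] at h
  have := mul_nonneg (sub_nonneg.mpr h1) (zero_le_one.trans (hκ.one_le 0))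
  linarith

lemma kappa_add (hκ : IsSublinearFn κ) {s u : ℝ} (hs : 0 ≤ s) (hu : 0 ≤ u) :
    κ (s + u) ≤ κ s + κ u := by
  rcases (add_nonneg hs hu).eq_or_lt with h | h
  · have e1 : s = 0 := by linarith
    have e2 : u = 0 := by linarith
    subst e1; subst e2
    have := hκ.one_le 0
    simp only [add_zero]
    linarith
  · have k1 := kappa_scale hκ h.le (s := s / (s + u)) (by positivity)
      (by rw [div_le_one h]; linarith)
    have k2 := kappa_scale hκ h.le (s := u / (s + u)) (by positivity)
      (by rw [div_le_one h]; linarith)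
    rw [div_mul_cancel₀ _ h.ne'] at k1 k2
    have : s / (s + u) * κ (s + u) + u / (s + u) * κ (s + u) = κ (s + u) := by
      field_simp
    linarith

lemma kappa_two (hκ : IsSublinearFn κ) {t : ℝ} (ht : 0 ≤ t) : κ (2 * t) ≤ 2 * κ t := by
  have := kappa_add hκ ht ht
  rw [two_mul, two_mul]; exact this

lemma kappa_eps (hκ : IsSublinearFn κ) {ε : ℝ} (hε : 0 < ε) :
    ∃ C ≥ (0:ℝ), ∀ t, 0 ≤ t → κ t ≤ ε * t + C := by
  have h := hκ.sublinear.eventually (gt_mem_nhds hε)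
  obtain ⟨T, hT⟩ := (h.and (eventually_gt_atTop 0)).exists_forall_of_atTop
  refine ⟨κ T, zero_le_one.trans (hκ.one_le T), ?_⟩
  intro t ht
  rcases le_total t T with h1 | h1
  · have := hκ.mono h1
    have := mul_nonneg hε.le ht
    linarith
  · obtain ⟨h2, h3⟩ := hT t h1
    rw [div_lt_iff₀ h3] at h2
    have := hκ.one_le T
    linarith

end kappa

section proj
variable {X : Type*} [MetricSpace X] {b : ℝ → X} {π : X → X}

lemma proj_mem (hπ : IsProj b π) (x : X) : ∃ u, 0 ≤ u ∧ π x = b u := by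
  obtain ⟨u, hu, h⟩ := (hπ x).1
  exact ⟨u, hu, h.symm⟩

lemma proj_le (hπ : IsProj b π) (x : X) {y : X} (hy : y ∈ rayIm b) :
    dist x (π x) ≤ dist x y := by
  rw [(hπ x).2]; exact infDist_le_dist_of_mem hy

lemma ray_frac (hb : IsGeodesicRay b) {u v s : ℝ} (hu : 0 ≤ u) (hv : 0 ≤ v)
    (h0 : 0 ≤ s) (h1 : s ≤ 1) : 0 ≤ u + s * (v - u) ∧
    AtFrac s (b u) (b v) (b (u + s * (v - u))) := by
  have hw : 0 ≤ u + s * (v - u) := by nlinarith [mul_nonneg h0 hv, mul_nonneg (sub_nonneg.mpr h1) hu]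
  refine ⟨hw, ?_, ?_⟩
  · rw [hb _ _ hu hw, hb _ _ hu hv]
    have : u - (u + s * (v - u)) = s * (u - v) := by ring
    rw [this, abs_mul, abs_of_nonneg h0]
  · rw [hb _ _ hw hv, hb _ _ hu hv]
    have : u + s * (v - u) - v = (1 - s) * (u - v) := by ring
    rw [this, abs_mul, abs_of_nonneg (sub_nonneg.mpr h1)]

lemma proj_pyth (hX : IsCAT0 X) (hb : IsGeodesicRay b) (hπ : IsProj b π) (x : X) {y : X}
    (hy : y ∈ rayIm b) : dist x (π x) ^ 2 + dist (π x) y ^ 2 ≤ dist x y ^ 2 := by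
  apply pyth hX
  intro s s0 s1
  obtain ⟨u, hu, e⟩ := proj_mem hπ x
  obtain ⟨v, hv, rfl⟩ := hy
  obtain ⟨h1, h2⟩ := ray_frac hb hu hv s0.le s1.le
  refine ⟨b (u + s * (v - u)), ?_, proj_le hπ x ⟨_, h1, rfl⟩⟩
  rw [e]; exact h2

lemma proj_unique (hX : IsCAT0 X) (hb : IsGeodesicRay b) (hπ : IsProj b π) {x y : X}
    (hy : y ∈ rayIm b) (h : dist x y ≤ dist x (π x)) : y = π x := by
  have k := proj_pyth hX hb hπ x hy
  have : dist x y ^ 2 ≤ dist x (π x) ^ 2 := by gcongr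
  have h2 : dist (π x) y ^ 2 ≤ 0 := by linarith
  have h3 : dist (π x) y = 0 := by
    have := sq_nonneg (dist (π x) y)
    exact pow_eq_zero_iff (two_ne_zero) |>.mp (le_antisymm h2 this)
  exact (dist_eq_zero.mp h3).symm

lemma proj_frac (hX : IsCAT0 X) (hb : IsGeodesicRay b) (hπ : IsProj b π) {x x' : X} {s : ℝ}
    (h : AtFrac s (π x) x x') : π x' = π x := by
  apply proj_unique hX hb hπ (hπ x').1
  have h1 := proj_le hπ x' (hπ x).1
  have h2 := dist_triangle x x' (π x')
  obtain ⟨a1, a2⟩ := h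
  rw [dist_comm x' x] at a2
  rw [dist_comm (π x) x'] at a1
  rw [dist_comm x (π x)]
  linarith

lemma proj_lip (hX : IsCAT0 X) (hb : IsGeodesicRay b) (hπ : IsProj b π) (x y : X) :
    dist (π x) (π y) ≤ dist x y := by
  have k1 := proj_pyth hX hb hπ x (hπ y).1
  have k2 := proj_pyth hX hb hπ y (hπ x).1
  have k3 := quad hX x y (π y) (π x)
  rw [dist_comm (π y) (π x)] at k2 k3
  rw [dist_comm (π x) x] at k3
  apply le_of_sq_le_sq _ dist_nonneg
  linarith

lemma proj_cont (hX : IsCAT0 X) (hb : IsGeodesicRay b) (hπ : IsProj b π) : Continuous π := by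
  have : LipschitzWith 1 π := LipschitzWith.of_dist_le_mul (fun x y => by
    simpa using proj_lip hX hb hπ x y)
  exact this.continuous

lemma proj_norm (hX : IsCAT0 X) (hb : IsGeodesicRay b) (hπ : IsProj b π) (x : X) :
    dist (b 0) (π x) ≤ dist (b 0) x := by
  have h0 : b 0 = π (b 0) := by
    apply proj_unique hX hb hπ ⟨0, by simp, rfl⟩
    simp
  calc dist (b 0) (π x) = dist (π (b 0)) (π x) := by rw [← h0]
    _ ≤ _ := proj_lip hX hb hπ _ _

lemma left_mem_seg (x y : X) : x ∈ seg x y := by simp [seg]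

theorem slim_contracting (hX : IsCAT0 X) {κ : ℝ → ℝ} (hκ : IsSublinearFn κ)
    (hb : IsGeodesicRay b) (hπ : IsProj b π) (h : SlimCond1 κ (b 0) b π) :
    KappaContracting κ (b 0) b π := by
  obtain ⟨c, hc, hs⟩ := h
  refine ⟨200 * (c + 1), by positivity, ?_⟩
  intro x y hxy
  set K := 2 * (c + 1) * κ (dist (b 0) x) with hK
  have hκ1 := hκ.one_le (dist (b 0) x)
  have hKpos : 0 < K := by positivity
  have b0 : b 0 ∈ rayIm b := ⟨0, by simp, rfl⟩
  by_contra hlt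
  push Not at hlt
  have hD : 100 * K ≤ dist (π x) (π y) := by rw [hK]; linarith
  rw [← (hπ x).2] at hxy
  have n1 := proj_norm hX hb hπ x
  have n2 := proj_norm hX hb hπ y
  have n3 : dist (b 0) y ≤ 2 * dist (b 0) x := by
    have := dist_triangle (b 0) x y
    have := proj_le hπ x b0
    rw [dist_comm x (b 0)] at this
    linarith
  have e1 : infDist (π x) (seg x (π y)) < K := by
    refine lt_of_le_of_lt (hs x (π y) (hπ y).1) ?_
    have := mul_le_mul_of_nonneg_left (hκ.mono n1) hc
    rw [hK]; nlinarith
  have e2 : infDist (π y) (seg y (π x)) < K := by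
    refine lt_of_le_of_lt (hs y (π x) (hπ x).1) ?_
    have := mul_le_mul_of_nonneg_left ((hκ.mono (n2.trans n3)).trans
      (kappa_two hκ dist_nonneg)) hc
    rw [hK]; nlinarith
  obtain ⟨p, hp, hp2⟩ := (infDist_lt_iff ⟨x, left_mem_seg _ _⟩).mp e1
  obtain ⟨q, hq, hq2⟩ := (infDist_lt_iff ⟨y, left_mem_seg _ _⟩).mp e2
  have hp' : dist x p + dist p (π y) = dist x (π y) := hp
  have hq' : dist y q + dist q (π x) = dist y (π x) := hq
  have i1 : dist x (π x) + dist (π x) (π y) - 2 * K ≤ dist x (π y) := by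
    have t1 := dist_triangle_right x (π x) p
    have t2 := dist_triangle (π x) p (π y)
    linarith
  have i2 : dist y (π y) + dist (π x) (π y) - 2 * K ≤ dist y (π x) := by
    have t1 := dist_triangle_right y (π y) q
    have t2 := dist_triangle (π y) q (π x)
    rw [dist_comm (π y) (π x)] at t2
    linarith
  have j1 : dist (π x) (π y) - 2 * K ≤ dist y (π y) := by
    have := dist_triangle x y (π y)
    linarith
  have j2 : dist (π x) (π y) - 2 * K ≤ dist x (π x) := by
    have := dist_triangle y x (π x)
    rw [dist_comm y x] at this
    linarith
  rcases le_total (dist y (π y)) (dist x (π x)) with hle | hle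
  · have := slim_core hX i1 i2 hD hKpos (by linarith) hle
    linarith
  · have := slim_core hX (x := y) (y := x) (p := π y) (q := π x) (K := K)
      (by rw [dist_comm (π y)]; exact i2) (by rw [dist_comm (π y)]; exact i1)
      (by rw [dist_comm (π y)]; exact hD) hKpos
      (by rw [dist_comm (π y)]; linarith) hle
    rw [dist_comm y x] at this
    linarith

end proj
/-- A `1`-Lipschitz path in `S` from `p` to `q` parametrized by `[0,T]`. -/
def LipPath {X : Type*} [MetricSpace X] (S : Set X) (p q : X) (T : ℝ) : Prop :=
  0 ≤ T ∧ ∃ γ : ℝ → X, γ 0 = p ∧ γ T = q ∧ (∀ s ∈ Icc (0:ℝ) T, γ s ∈ S) ∧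
    ∀ s ∈ Icc (0:ℝ) T, ∀ t ∈ Icc (0:ℝ) T, dist (γ s) (γ t) ≤ |s - t|

section paths
variable {X : Type*} [MetricSpace X]

lemma LipPath.symm {S : Set X} {p q : X} {T : ℝ} (h : LipPath S p q T) : LipPath S q p T := by
  obtain ⟨hT, γ, h0, h1, hS, hL⟩ := h
  have mem : ∀ s ∈ Icc (0:ℝ) T, T - s ∈ Icc (0:ℝ) T := fun s hs =>
    ⟨by linarith [hs.2], by linarith [hs.1]⟩
  refine ⟨hT, fun s => γ (T - s), by simpa using h1, by simpa using h0,
    fun s hs => hS _ (mem s hs), ?_⟩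
  intro s hs t ht
  have := hL _ (mem s hs) _ (mem t ht)
  have e : T - s - (T - t) = t - s := by ring
  rw [e, abs_sub_comm] at this
  exact this

lemma LipPath.trans {S : Set X} {p q r : X} {T U : ℝ} (h : LipPath S p q T)
    (h' : LipPath S q r U) : LipPath S p r (T + U) := by
  obtain ⟨hT, γ, h0, h1, hS, hL⟩ := h
  obtain ⟨hU, δ, k0, k1, kS, kL⟩ := h'
  have main : ∀ s ∈ Icc (0:ℝ) (T + U), ∀ t ∈ Icc (0:ℝ) (T + U), s ≤ t →
      dist (if s ≤ T then γ s else δ (s - T)) (if t ≤ T then γ t else δ (t - T)) ≤ t - s := by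
    intro s hs t ht hst
    by_cases a : t ≤ T
    · rw [if_pos a, if_pos (hst.trans a)]
      have := hL s ⟨hs.1, hst.trans a⟩ t ⟨ht.1, a⟩
      rwa [abs_sub_comm, abs_of_nonneg (by linarith)] at this
    · rw [if_neg a]
      push Not at a
      by_cases c : s ≤ T
      · rw [if_pos c]
        have e1 := hL s ⟨hs.1, c⟩ T ⟨hT, le_rfl⟩
        have e2 := kL 0 ⟨le_rfl, hU⟩ (t - T) ⟨by linarith, by linarith [ht.2]⟩
        rw [h1, abs_sub_comm, abs_of_nonneg (by linarith)] at e1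
        rw [k0, abs_sub_comm, abs_of_nonneg (by linarith)] at e2
        have := dist_triangle (γ s) q (δ (t - T))
        linarith
      · rw [if_neg c]
        push Not at c
        have e2 := kL (s - T) ⟨by linarith, by linarith [hs.2]⟩ (t - T)
          ⟨by linarith, by linarith [ht.2]⟩
        rw [abs_sub_comm, abs_of_nonneg (by linarith)] at e2
        linarith
  refine ⟨by linarith, fun s => if s ≤ T then γ s else δ (s - T), ?_, ?_, ?_, ?_⟩
  · simp [hT, h0]
  · by_cases c : T + U ≤ T
    · have : U = 0 := by linarith
      subst this
      simp [h1, ← k0, k1]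
    · simp only [if_neg c]
      simpa using k1
  · intro s hs
    by_cases c : s ≤ T
    · simp only [if_pos c]; exact hS s ⟨hs.1, c⟩
    · simp only [if_neg c]
      push Not at c
      exact kS _ ⟨by linarith, by linarith [hs.2]⟩
  · intro s hs t ht
    rcases le_total s t with h | h
    · have := main s hs t ht h
      rw [abs_sub_comm, abs_of_nonneg (by linarith)]
      exact this
    · have := main t ht s hs h
      rw [dist_comm, abs_of_nonneg (by linarith)]
      exact this

lemma LipPath.geod (hX : IsCAT0 X) {S : Set X} {p q : X} (h : ∀ z ∈ seg p q, z ∈ S) :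
    LipPath S p q (dist p q) := by
  obtain ⟨γ, h0, h1, hg⟩ := hX.1 p q
  refine ⟨dist_nonneg, γ, h0, h1, ?_, fun s hs t ht => (hg s hs t ht).le⟩
  intro s hs
  apply h
  have e1 := hg 0 ⟨le_rfl, dist_nonneg⟩ s hs
  have e2 := hg s hs _ ⟨dist_nonneg, le_rfl⟩
  rw [h0, abs_sub_comm, abs_of_nonneg (by linarith [hs.1])] at e1
  rw [h1, abs_sub_comm, abs_of_nonneg (by linarith [hs.2])] at e2
  show dist p (γ s) + dist (γ s) q = dist p q
  linarith

lemma LipPath.rho_le {κ : ℝ → ℝ} {b : ℝ → X} {r t T : ℝ}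
    (h : LipPath (ball (b t) (r * κ t))ᶜ (b (t - r * κ t)) (b (t + r * κ t)) T) :
    rhoKappa κ b r t ≤ ENNReal.ofReal T := by
  obtain ⟨hT, γ, h0, h1, hS, hL⟩ := h
  have mem : ∀ s ∈ Icc (0:ℝ) 1, T * s ∈ Icc (0:ℝ) T := fun s hs =>
    ⟨mul_nonneg hT hs.1, mul_le_of_le_one_right hT hs.2⟩
  have lip : LipschitzOnWith T.toNNReal (fun s => γ (T * s)) (Icc 0 1) := by
    apply LipschitzOnWith.of_dist_le_mul
    intro s hs u hu
    have := hL _ (mem s hs) _ (mem u hu)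
    rw [← mul_sub, abs_mul, abs_of_nonneg hT] at this
    rw [Real.coe_toNNReal _ hT, Real.dist_eq]
    exact this
  have hmem : (fun s => γ (T * s)) ∈ pathsOutside κ b r t := by
    refine ⟨lip.continuousOn, by simpa using h0, by simpa using h1, ?_⟩
    intro s hs
    exact hS _ (mem s hs)
  refine (iInf₂_le _ hmem).trans ?_
  have k := lip.comp_eVariationOn_le (g := id) (s := Icc (0:ℝ) 1) (fun x hx => hx)
  have k2 : eVariationOn (id : ℝ → ℝ) (Icc (0:ℝ) 1) ≤ 1 := by
    simp
  calc _ ≤ _ := k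
    _ ≤ (T.toNNReal : ℝ≥0∞) * 1 := by gcongr
    _ = _ := by rw [mul_one]; rfl

/-- A chord from the foot `m` to the radial point at distance `q` has length at most `√2 q`. -/
lemma chord_le (hX : IsCAT0 X) {w m x x' : X} (hq : 0 < dist w m) (hx : dist w m ≤ dist w x)
    (hp : dist w m ^ 2 + dist m x ^ 2 ≤ dist w x ^ 2)
    (h : AtFrac (dist w m / dist w x) w x x') :
    dist m x' ^ 2 ≤ 2 * dist w m ^ 2 := by
  set q := dist w m with hqd
  have hx0 : 0 < dist w x := by linarith
  set L := dist w x with hL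
  have s1 : q / L ≤ 1 := by rw [div_le_one hx0]; exact hx
  have s0 : 0 ≤ q / L := by positivity
  have st := stewart hX m s0 s1 h
  rw [dist_comm m w, ← hqd, ← hL] at st
  have h1 : q / L * dist m x ^ 2 ≤ q / L * (L ^ 2 - q ^ 2) := by
    gcongr; linarith
  have h2 : (1 - q / L) * q ^ 2 + q / L * (L ^ 2 - q ^ 2) - q / L * (1 - q / L) * L ^ 2
      = 2 * q ^ 2 - 2 * (q / L) * q ^ 2 := by
    field_simp; ring
  have h3 : 0 ≤ 2 * (q / L) * q ^ 2 := by positivity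
  linarith

lemma chord_far {w m x' z : X} {R : ℝ} (hR : 0 < R) (hq : dist w m = 12 * R)
    (hx' : dist w x' = 12 * R)
    (h : dist m x' ^ 2 ≤ 2 * (12 * R) ^ 2) (hz : dist m z + dist z x' = dist m x') :
    3 * R ≤ dist w z := by
  have h1 : dist m x' ≤ 17 * R := by
    apply le_of_sq_le_sq _ (by positivity)
    nlinarith
  have t1 := dist_triangle w z m
  have t2 := dist_triangle w z x'
  rw [dist_comm z m] at t1
  linarith

set_option maxHeartbeats 1000000 in
lemma bad_path (hX : IsCAT0 X) {b : ℝ → X} {π : X → X} (hb : IsGeodesicRay b)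
    (hπ : IsProj b π) {x m : X} {t u σ R : ℝ} (ht : 0 ≤ t) (hpx : π x = b t)
    (hσ : σ = 1 ∨ σ = -1) (hu : u = t + σ * |u - t|) (hu0 : 0 ≤ u)
    (hm : m ∈ seg x (b u)) (hmin : ∀ n ∈ seg x (b u), dist (b t) m ≤ dist (b t) n)
    (hR : 0 < R) (hq : dist (b t) m = 12 * R) :
    12 * R ≤ |u - t| ∧ ∃ T ≤ 60 * R,
      LipPath (ball (b (t + σ * (2 * R))) R)ᶜ (b (t + σ * R)) (b (t + σ * (3 * R))) T := by
  have hseg : dist x m + dist m (b u) = dist x (b u) := hm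
  have hxm : dist (b t) m ≤ dist (b t) x := hmin x (left_mem_seg _ _)
  have hym : dist (b t) m ≤ dist (b t) (b u) := hmin (b u) (by simp [seg])
  have hdu : dist (b t) (b u) = |u - t| := by rw [hb _ _ ht hu0, abs_sub_comm]
  have hDu : 12 * R ≤ |u - t| := by linarith
  refine ⟨hDu, ?_⟩
  have pos : ∀ a, 0 ≤ a → a ≤ 12 * R → 0 ≤ t + σ * a := by
    intro a ha ha2
    rcases hσ with h | h <;> subst h
    · linarith
    · linarith
  have dd : ∀ a c, 0 ≤ a → a ≤ 12 * R → 0 ≤ c → c ≤ 12 * R →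
      dist (b (t + σ * a)) (b (t + σ * c)) = |a - c| := by
    intro a c ha ha2 hc hc2
    rw [hb _ _ (pos a ha ha2) (pos c hc hc2)]
    have : t + σ * a - (t + σ * c) = σ * (a - c) := by ring
    rw [this, abs_mul]
    rcases hσ with h | h <;> subst h <;> simp
  have dt : ∀ c, 0 ≤ c → c ≤ 12 * R → dist (b t) (b (t + σ * c)) = c := by
    intro c hc hc2
    have := dd 0 c le_rfl (by linarith) hc hc2
    simpa [abs_of_nonneg hc] using this
  -- Pythagoras at m
  have py : ∀ v, (v = x ∨ v = b u) →
      dist (b t) m ^ 2 + dist m v ^ 2 ≤ dist (b t) v ^ 2 := by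
    intro v hv
    apply pyth hX
    intro s s0 s1
    obtain ⟨n, hn⟩ := exists_frac hX m v s0.le s1.le
    refine ⟨n, hn, hmin n ?_⟩
    show dist x n + dist n (b u) = dist x (b u)
    apply le_antisymm _ (dist_triangle _ _ _)
    obtain ⟨n1, n2⟩ := hn
    rcases hv with rfl | rfl
    · have := dist_triangle n m (b u)
      rw [dist_comm n m] at this
      rw [dist_comm v n]
      have e : dist v m = dist m v := dist_comm _ _
      linarith
    · have := dist_triangle x m n
      linarith
  -- radial points
  have hx0 : 0 < dist (b t) x := by linarith
  have hy0 : 0 < dist (b t) (b u) := by linarith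
  have hm0 : 0 < dist (b t) m := by linarith
  have s1 : dist (b t) m / dist (b t) x ≤ 1 := by rw [div_le_one hx0]; exact hxm
  obtain ⟨x', hx'⟩ := exists_frac hX (b t) x (s := dist (b t) m / dist (b t) x)
    (by positivity) s1
  have cx := chord_le hX hm0 hxm (py x (Or.inl rfl)) hx'
  have hy' : AtFrac (dist (b t) m / dist (b t) (b u)) (b t) (b u) (b (t + σ * (12 * R))) := by
    refine ⟨?_, ?_⟩
    · rw [dt _ (by linarith) le_rfl, div_mul_cancel₀ _ hy0.ne', hq]
    · rw [sub_mul, div_mul_cancel₀ _ hy0.ne', one_mul, hdu, hq, hb _ _ (pos _ (by linarith) le_rfl) hu0]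
      have : t + σ * (12 * R) - u = σ * (12 * R - |u - t|) := by
        rw [mul_sub]; linarith
      rw [this, abs_mul, abs_of_nonpos (by linarith : 12 * R - |u - t| ≤ 0)]
      rcases hσ with h | h <;> subst h <;> simp
  have cy := chord_le hX hm0 hym (py (b u) (Or.inr rfl)) hy'
  rw [hq] at cx cy
  have hx'd : dist (b t) x' = 12 * R := by
    rw [hx'.1, div_mul_cancel₀ _ hx0.ne', hq]
  have hx'e : dist x' x = dist (b t) x - 12 * R := by
    rw [hx'.2, sub_mul, div_mul_cancel₀ _ hx0.ne', hq, one_mul]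
  set w := b (t + σ * (2 * R)) with hw
  have hwt : dist (b t) w = 2 * R := dt _ (by linarith) (by linarith)
  have out : ∀ z, R ≤ dist z w → z ∈ (ball w R)ᶜ := by
    intro z hz
    simp only [mem_compl_iff, mem_ball, not_lt]; exact hz
  have g1 : LipPath (ball w R)ᶜ (b (t + σ * R)) (b t) R := by
    have e := dt R hR.le (by linarith)
    have := LipPath.geod hX (S := (ball w R)ᶜ) (p := b (t + σ * R)) (q := b t) ?_
    · rwa [dist_comm, e] at this
    · intro z hz
      apply out
      have hz' : dist (b (t + σ * R)) z + dist z (b t) = dist (b (t + σ * R)) (b t) := hz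
      rw [dist_comm (b (t + σ * R)) (b t), e] at hz'
      have := dist_triangle (b t) z w
      rw [dist_comm (b t) z] at this
      have p := dist_nonneg (x := b (t + σ * R)) (y := z)
      linarith
  have g2 : LipPath (ball w R)ᶜ (b t) x' (12 * R) := by
    have := LipPath.geod hX (S := (ball w R)ᶜ) (p := b t) (q := x') ?_
    · rwa [hx'd] at this
    · intro z hz
      apply out
      have hz' : dist (b t) z + dist z x' = dist (b t) x' := hz
      have k1 := proj_le hπ x (y := w) ⟨_, pos (2 * R) (by linarith) (by linarith), rfl⟩
      rw [hpx, dist_comm x (b t)] at k1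
      have k2 := dist_triangle4 x x' z w
      rw [dist_comm x x', dist_comm x' z] at k2
      have k3 := dist_triangle (b t) z w
      linarith
  have g3 : LipPath (ball w R)ᶜ x' m (dist m x') := by
    have := LipPath.geod hX (S := (ball w R)ᶜ) (p := m) (q := x') ?_
    · exact this.symm
    · intro z hz
      apply out
      have := chord_far hR hq hx'd cx hz
      have := dist_triangle_right (b t) z w
      have := dist_triangle (b t) w z
      rw [dist_comm w z] at this
      linarith
  have g4 : LipPath (ball w R)ᶜ m (b (t + σ * (12 * R))) (dist m (b (t + σ * (12 * R)))) := by
    apply LipPath.geod hX (S := (ball w R)ᶜ)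
    intro z hz
    apply out
    have := chord_far hR hq (dt _ (by linarith) le_rfl) cy hz
    have := dist_triangle (b t) w z
    rw [dist_comm w z] at this
    linarith
  have g5 : LipPath (ball w R)ᶜ (b (t + σ * (12 * R))) (b (t + σ * (3 * R))) (9 * R) := by
    have e := dd (12 * R) (3 * R) (by linarith) le_rfl (by linarith) (by linarith)
    have e2 := dd (12 * R) (2 * R) (by linarith) le_rfl (by linarith) (by linarith)
    rw [abs_of_nonneg (by linarith)] at e e2
    have := LipPath.geod hX (S := (ball w R)ᶜ) (p := b (t + σ * (12 * R)))
      (q := b (t + σ * (3 * R))) ?_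
    · rw [e] at this
      have e3 : 12 * R - 3 * R = 9 * R := by ring
      rwa [e3] at this
    · intro z hz
      apply out
      have hz' : dist (b (t + σ * (12 * R))) z + dist z (b (t + σ * (3 * R)))
        = dist (b (t + σ * (12 * R))) (b (t + σ * (3 * R))) := hz
      have := dist_triangle (b (t + σ * (12 * R))) z w
      have p := dist_nonneg (x := z) (y := b (t + σ * (3 * R)))
      linarith
  refine ⟨_, ?_, (((g1.trans g2).trans g3).trans g4).trans g5⟩
  have h1 : dist m x' ≤ 17 * R := by
    apply le_of_sq_le_sq _ (by positivity)
    nlinarith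
  have h2 : dist m (b (t + σ * (12 * R))) ≤ 17 * R := by
    apply le_of_sq_le_sq _ (by positivity)
    nlinarith
  linarith

theorem superlinear_slim [ProperSpace X] (hX : IsCAT0 X) {κ : ℝ → ℝ} (hκ : IsSublinearFn κ)
    {b : ℝ → X} {π : X → X} (hb : IsGeodesicRay b) (hπ : IsProj b π)
    (h : Tendsto (fun r : ℝ => divKappa κ b r / ENNReal.ofReal r) atTop (nhds ⊤)) :
    SlimCond1 κ (b 0) b π := by
  have h1 := h.eventually (lt_mem_nhds (show (100:ℝ≥0∞) < ⊤ by simp))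
  obtain ⟨r0', hr0'⟩ := h1.exists_forall_of_atTop
  set r0 := max r0' 1 with hr0d
  have hr01 : 1 ≤ r0 := le_max_right _ _
  have hr0 : ∀ r ≥ r0, 100 < divKappa κ b r / ENNReal.ofReal r := fun r hr =>
    hr0' r ((le_max_left _ _).trans hr)
  obtain ⟨C, hC, hCe⟩ := kappa_eps hκ (ε := 1 / (4 * r0)) (by positivity)
  refine ⟨48 * r0 * (1 + C), by positivity, ?_⟩
  intro x y hy
  obtain ⟨u, hu, rfl⟩ := hy
  have hu0 : 0 ≤ u := hu
  by_contra hlt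
  push Not at hlt
  obtain ⟨t, ht, hpx⟩ := proj_mem hπ x
  rw [hpx] at hlt
  have hdt : dist (b 0) (b t) = t := by
    rw [hb _ _ le_rfl ht]; simp [abs_of_nonneg ht]
  rw [hdt] at hlt
  have hcl : IsClosed (seg x (b u)) := by
    unfold seg
    exact isClosed_eq (by fun_prop) (by fun_prop)
  obtain ⟨m, hm, hmd⟩ := hcl.exists_infDist_eq_dist ⟨x, left_mem_seg _ _⟩ (b t)
  rw [hmd] at hlt
  have hκt := hκ.one_le t
  obtain ⟨R, hRd⟩ : ∃ R, dist (b t) m = 12 * R := ⟨dist (b t) m / 12, by ring⟩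
  have hR2 : 4 * r0 * (1 + C) * κ t < R := by linarith
  have hRC : 4 * r0 * (1 + C) ≤ 4 * r0 * (1 + C) * κ t :=
    le_mul_of_one_le_right (by positivity) hκt
  have hR : 0 < R := lt_trans (by positivity) hR2
  have hmin : ∀ n ∈ seg x (b u), dist (b t) m ≤ dist (b t) n := fun n hn => by
    rw [← hmd]; exact infDist_le_dist_of_mem hn
  -- final contradiction from a good center
  have fin : ∀ t', R < t' → r0 * κ t' ≤ R →
      (∃ T ≤ 60 * R, LipPath (ball (b t') R)ᶜ (b (t' - R)) (b (t' + R)) T) → False := by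
    rintro t' ht' hk ⟨T, hT, hp⟩
    have k1 := hκ.one_le t'
    have k0 : 0 < κ t' := by linarith
    have e : R / κ t' * κ t' = R := div_mul_cancel₀ _ k0.ne'
    have hr : r0 ≤ R / κ t' := by rw [le_div_iff₀ k0]; exact hk
    have hrpos : 0 < R / κ t' := by positivity
    have big := hr0 _ hr
    have rho : rhoKappa κ b (R / κ t') t' ≤ ENNReal.ofReal T := by
      apply LipPath.rho_le
      rw [e]; exact hp
    have dv : divKappa κ b (R / κ t') ≤ ENNReal.ofReal (60 * (R / κ t')) := by
      have d1 : divKappa κ b (R / κ t') ≤ rhoKappa κ b (R / κ t') t' / ENNReal.ofReal (κ t') := by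
        apply iInf₂_le
        show R / κ t' * κ t' < t'
        rw [e]; exact ht'
      refine d1.trans ?_
      have e2 : 60 * (R / κ t') = (60 * R) / κ t' := by ring
      rw [e2, ENNReal.ofReal_div_of_pos k0]
      gcongr
      exact rho.trans (ENNReal.ofReal_le_ofReal hT)
    have d2 : divKappa κ b (R / κ t') / ENNReal.ofReal (R / κ t') ≤ 60 := by
      apply ENNReal.div_le_of_le_mul
      refine dv.trans ?_
      rw [ENNReal.ofReal_mul (by norm_num)]
      simp
    have := lt_of_lt_of_le big d2
    norm_num at this
  rcases le_total t u with htu | htu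
  · have := bad_path hX hb hπ (σ := 1) ht hpx (Or.inl rfl)
      (by rw [abs_of_nonneg (by linarith)]; ring) hu0 hm hmin hR hRd
    obtain ⟨-, T, hT, hp⟩ := this
    refine fin (t + 2 * R) (by linarith) ?_ ⟨T, hT, ?_⟩
    · have a1 := kappa_add hκ ht (u := 2 * R) (by linarith)
      have a2 := hCe (2 * R) (by linarith)
      have a3 : r0 * κ (t + 2 * R) ≤ r0 * (κ t + (1 / (4 * r0) * (2 * R) + C)) := by
        gcongr; linarith
      have a4 : r0 * (κ t + (1 / (4 * r0) * (2 * R) + C)) = r0 * κ t + R / 2 + r0 * C := by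
        field_simp; ring
      have a5 : 0 ≤ r0 * C := by positivity
      have a6 : r0 * C ≤ r0 * C * κ t := le_mul_of_one_le_right a5 hκt
      nlinarith
    · convert hp using 2
      · simp
      · ring
      · ring
  · have := bad_path hX hb hπ (σ := -1) ht hpx (Or.inr rfl)
      (by rw [abs_of_nonpos (by linarith)]; ring) hu0 hm hmin hR hRd
    obtain ⟨hD, T, hT, hp⟩ := this
    rw [abs_of_nonpos (by linarith)] at hD
    refine fin (t - 2 * R) (by linarith) ?_ ⟨T, hT, ?_⟩
    · have a1 : κ (t - 2 * R) ≤ κ t := hκ.mono (by linarith)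
      have a3 : r0 * κ (t - 2 * R) ≤ r0 * κ t := by gcongr
      have a5 : 0 ≤ r0 * C * κ t := by positivity
      have a6 : 0 ≤ r0 * κ t := by positivity
      nlinarith
    · convert hp.symm using 2
      · ring_nf
      · ring
      · ring

end paths
section quadratic
variable {X : Type*} [MetricSpace X]

/-- Contraction at all heights above a multiple of `κ(x_b)`. -/
lemma contracting_half (hX : IsCAT0 X) {κ : ℝ → ℝ} (hκ : IsSublinearFn κ)
    {b : ℝ → X} {π : X → X} (hb : IsGeodesicRay b) (hπ : IsProj b π)
    (h : KappaContracting κ (b 0) b π) :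
    ∃ M > (0:ℝ), ∀ x y : X, M * κ (dist (b 0) (π x)) ≤ dist x (π x) →
      dist x y ≤ dist x (π x) / 2 → dist (π x) (π y) ≤ M * κ (dist (b 0) (π x)) / 2 := by
  obtain ⟨c, hc, hcon⟩ := h
  obtain ⟨C, hC, hCe⟩ := kappa_eps hκ (ε := 1 / (8 * (c + 1))) (by positivity)
  refine ⟨8 * (c + 1) * (1 + C), by positivity, ?_⟩
  intro x y hH hxy
  set K := κ (dist (b 0) (π x)) with hK
  have hK1 : 1 ≤ K := hκ.one_le _
  set H := 8 * (c + 1) * (1 + C) * K with hHd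
  have hHpos : 0 < H := by positivity
  by_contra hlt
  push Not at hlt
  set A := dist x (π x) with hA
  have hApos : 0 < A := by linarith
  -- intermediate point
  obtain ⟨γ, g0, g1, hg⟩ := hX.1 x y
  have hγ : ContinuousOn γ (Icc 0 (dist x y)) := by
    have : LipschitzOnWith 1 γ (Icc 0 (dist x y)) := by
      apply LipschitzOnWith.of_dist_le_mul
      intro a ha c hc
      rw [hg a ha c hc, Real.dist_eq]; simp
    exact this.continuousOn
  have hf : ContinuousOn (fun s => dist (π x) (π (γ s))) (Icc 0 (dist x y)) :=
    (continuous_const.dist (proj_cont hX hb hπ)).comp_continuousOn hγ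
  have ivt := intermediate_value_Icc (dist_nonneg (x := x) (y := y)) hf
  have hmem : H / 2 ∈ Icc ((fun s => dist (π x) (π (γ s))) 0)
      ((fun s => dist (π x) (π (γ s))) (dist x y)) := by
    simp only [g0, g1, dist_self]
    exact ⟨by positivity, hlt.le⟩
  obtain ⟨s, hs, hsz⟩ := ivt hmem
  simp only at hsz
  have hxz : dist x (γ s) ≤ A / 2 := by
    have := hg 0 ⟨le_rfl, dist_nonneg⟩ s hs
    rw [g0, abs_sub_comm, abs_of_nonneg (by linarith [hs.1])] at this
    linarith [hs.2]
  set z := γ s with hz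
  have f0 : 0 ≤ H / A := by positivity
  have f1 : H / A ≤ 1 := by rw [div_le_one hApos]; exact hH
  obtain ⟨x', hx'⟩ := exists_frac hX (π x) x f0 f1
  obtain ⟨z', hz'⟩ := exists_frac hX (π z) z f0 f1
  have px := proj_frac hX hb hπ hx'
  have pz := proj_frac hX hb hπ hz'
  have bus := busemann hX f0 f1 hx' hz'
  have hx'd : dist (π x) x' = H := by
    rw [hx'.1, dist_comm (π x) x, ← hA, div_mul_cancel₀ _ hApos.ne']
  have l1 : dist x' z' ≤ H := by
    rw [hsz] at bus
    have e1 : H / A * dist x z ≤ H / A * (A / 2) := by gcongr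
    have e2 : H / A * (A / 2) = H / 2 := by field_simp
    have e3 : (1 - H / A) * (H / 2) ≤ 1 * (H / 2) := by gcongr; linarith
    linarith
  have l2 := hcon x' z' (by rw [← (hπ x').2, px, dist_comm x' (π x), hx'd]; exact l1)
  rw [px, pz, hsz] at l2
  have l3 : κ (dist (b 0) x') ≤ K + (1 / (8 * (c + 1)) * H + C) := by
    have a1 := dist_triangle (b 0) (π x) x'
    rw [hx'd] at a1
    have a2 := kappa_add hκ (dist_nonneg (x := b 0) (y := π x)) hHpos.le
    have a3 := hCe H hHpos.le
    have a4 := hκ.mono a1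
    linarith
  have l4 : c * κ (dist (b 0) x') ≤ (c + 1) * (K + (1 / (8 * (c + 1)) * H + C)) := by
    have : 0 ≤ κ (dist (b 0) x') := zero_le_one.trans (hκ.one_le _)
    gcongr
    linarith
  have l5 : (c + 1) * (K + (1 / (8 * (c + 1)) * H + C)) = (c + 1) * (K + C) + H / 8 := by
    field_simp
    ring
  have l6 : (c + 1) * (K + C) ≤ H / 8 := by
    have : H / 8 = (c + 1) * (K + C * K) := by rw [hHd]; ring
    rw [this]
    gcongr
    exact le_mul_of_one_le_right hC hK1
  linarith

/-- Counting crossings of levels. -/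
lemma variation_levels (γ : ℝ → X) (φ : ℝ → ℝ) (hφ : ContinuousOn φ (Icc 0 1))
    {Δ l v0 V : ℝ} (hΔ : 0 < Δ) (hV : V ≤ φ 1)
    (hstep : ∀ s ∈ Icc (0:ℝ) 1, ∀ u ∈ Icc (0:ℝ) 1, v0 ≤ φ s → φ u = φ s + Δ → φ u ≤ V →
      l ≤ dist (γ s) (γ u)) :
    ∀ n : ℕ, ∀ s ∈ Icc (0:ℝ) 1, v0 ≤ φ s → φ s + n * Δ ≤ V →
      (n : ℝ≥0∞) * ENNReal.ofReal l ≤ eVariationOn γ (Icc s 1) := by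
  intro n
  induction n with
  | zero => intro s _ _ _; simp
  | succ n ih =>
    intro s hs hv hle
    push_cast at hle
    have hn : 0 ≤ (n:ℝ) * Δ := by positivity
    have ivt := intermediate_value_Icc hs.2 (hφ.mono (Icc_subset_Icc_left hs.1))
    obtain ⟨u, hu, hue⟩ := ivt (show φ s + Δ ∈ Icc (φ s) (φ 1) from ⟨by linarith, by linarith⟩)
    have hu1 : u ∈ Icc (0:ℝ) 1 := ⟨hs.1.trans hu.1, hu.2⟩
    have k1 := ih u hu1 (by linarith) (by linarith)
    have k2 := hstep s hs u hu1 hv hue (by linarith)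
    have k3 : ENNReal.ofReal l ≤ eVariationOn γ (Icc s u) := by
      refine le_trans ?_ (eVariationOn.edist_le γ (left_mem_Icc.mpr hu.1)
        (right_mem_Icc.mpr hu.1))
      rw [edist_dist]
      exact ENNReal.ofReal_le_ofReal k2
    have k4 := eVariationOn.Icc_add_Icc γ (s := univ) hu.1 hu.2 (mem_univ u)
    simp only [univ_inter] at k4
    rw [← k4]
    push_cast
    rw [add_mul, one_mul, add_comm]
    gcongr

theorem contracting_quadratic (hX : IsCAT0 X) {κ : ℝ → ℝ} (hκ : IsSublinearFn κ)
    {b : ℝ → X} {π : X → X} (hb : IsGeodesicRay b) (hπ : IsProj b π)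
    (h : KappaContracting κ (b 0) b π) :
    ∃ a > (0:ℝ), ∃ b₀ c₀ : ℝ, ∀ r : ℝ, 0 < r →
        ENNReal.ofReal (a * r ^ 2 + b₀ * r + c₀) ≤ divKappa κ b r := by
  obtain ⟨M, hM, hcon⟩ := contracting_half hX hκ hb hπ h
  refine ⟨1 / (8 * M), by positivity, -1 / 2, 0, ?_⟩
  intro r hr
  rcases le_total r (4 * M) with hrM | hrM
  · have : 1 / (8 * M) * r ^ 2 + -1 / 2 * r + 0 ≤ 0 := by
      have e : 1 / (8 * M) * r ^ 2 + -1 / 2 * r + 0 = r * (r - 4 * M) / (8 * M) := by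
        field_simp; ring
      rw [e]
      apply div_nonpos_of_nonpos_of_nonneg _ (by positivity)
      nlinarith
    rw [ENNReal.ofReal_of_nonpos this]
    exact zero_le
  refine le_iInf₂ ?_
  intro t ht
  have ht' : r * κ t < t := ht
  have k1 := hκ.one_le t
  have k0 : 0 < κ t := by linarith
  set R := r * κ t with hR
  have hRpos : 0 < R := by positivity
  have ht0 : 0 < t := by linarith
  rw [ENNReal.le_div_iff_mul_le (Or.inl (by simpa using k0)) (Or.inl ENNReal.ofReal_ne_top)]
  refine le_iInf₂ ?_
  rintro γ ⟨hγ, h0, h1, hout⟩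
  set φ : ℝ → ℝ := fun s => dist (b 0) (π (γ s)) with hφd
  have hφ : ContinuousOn φ (Icc 0 1) :=
    (continuous_const.dist (proj_cont hX hb hπ)).comp_continuousOn hγ
  have hray : ∀ u, 0 ≤ u → dist (b 0) (b u) = u := by
    intro u hu
    rw [hb _ _ le_rfl hu]; simp [abs_of_nonneg hu]
  have hpb : ∀ u, 0 ≤ u → π (b u) = b u := by
    intro u hu
    symm
    apply proj_unique hX hb hπ ⟨u, hu, rfl⟩
    simp
  have φ0 : φ 0 = t - R := by
    simp only [hφd, h0]
    rw [hpb _ (by linarith), hray _ (by linarith)]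
  have φ1 : φ 1 = t + R := by
    simp only [hφd, h1]
    rw [hpb _ (by linarith), hray _ (by linarith)]
  have hπφ : ∀ s, π (γ s) = b (φ s) := by
    intro s
    obtain ⟨u, hu, e⟩ := proj_mem hπ (γ s)
    simp only [hφd]
    rw [e, hray u hu]
  have φnn : ∀ s, 0 ≤ φ s := fun s => dist_nonneg
  obtain ⟨s0, hs0, hs0e⟩ := intermediate_value_Icc zero_le_one hφ
    (show t - R / 2 ∈ Icc (φ 0) (φ 1) by rw [φ0, φ1]; exact ⟨by linarith, by linarith⟩)
  have hΔ : 0 < 2 * M * κ t := by positivity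
  set N := ⌊r / (2 * M)⌋₊ with hN
  have hNle : (N : ℝ) ≤ r / (2 * M) := Nat.floor_le (by positivity)
  have hNge : r / (2 * M) - 1 ≤ N := by
    have := Nat.lt_floor_add_one (r / (2 * M))
    linarith
  have lev := variation_levels γ φ hφ (Δ := 2 * M * κ t) (l := R / 4) (v0 := t - R / 2)
    (V := t + R / 2) hΔ (by rw [φ1]; linarith) ?_ N s0 hs0 hs0e.ge ?_
  · have mono : eVariationOn γ (Icc s0 1) ≤ eVariationOn γ (Icc 0 1) :=
      eVariationOn.mono γ (Icc_subset_Icc_left hs0.1)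
    refine le_trans ?_ (lev.trans mono)
    rw [← ENNReal.ofReal_mul' k0.le, ← ENNReal.ofReal_natCast,
      ← ENNReal.ofReal_mul (Nat.cast_nonneg _)]
    apply ENNReal.ofReal_le_ofReal
    have e1 : (r / (2 * M) - 1) * (R / 4) ≤ N * (R / 4) := by gcongr
    have e2 : (1 / (8 * M) * r ^ 2 + -1 / 2 * r + 0) * κ t
        = (r / (2 * M) - 1) * (R / 4) - R / 4 := by
      rw [hR]; field_simp; ring
    linarith
  · intro s hs u hu hv he hV
    by_contra hlt
    push Not at hlt
    have hφt : φ s ≤ t + R / 2 := by linarith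
    have hball := hout s hs
    simp only [mem_ball, not_lt] at hball
    have d1 : dist (b (φ s)) (b t) ≤ R / 2 := by
      rw [hb _ _ (φnn s) ht0.le, abs_le]
      constructor <;> linarith
    have hA : R / 2 ≤ dist (γ s) (π (γ s)) := by
      have := dist_triangle (γ s) (π (γ s)) (b t)
      rw [hπφ s] at this ⊢
      linarith
    have hk : κ (dist (b 0) (π (γ s))) ≤ 2 * κ t := by
      refine (hκ.mono (?_ : _ ≤ 2 * t)).trans (kappa_two hκ ht0.le)
      show φ s ≤ 2 * t
      linarith
    have hk2 : M * κ (dist (b 0) (π (γ s))) ≤ M * (2 * κ t) := by gcongr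
    have hRM : 4 * M * κ t ≤ R := by rw [hR]; gcongr
    have := hcon (γ s) (γ u) (by linarith) (by linarith)
    rw [hπφ s, hπφ u, hb _ _ (φnn s) (φnn u), he] at this
    rw [← hπφ s] at this
    have e : φ s - (φ s + 2 * M * κ t) = - (2 * M * κ t) := by ring
    rw [e, abs_neg, abs_of_pos hΔ] at this
    linarith
  · rw [hs0e]
    have : (N:ℝ) * (2 * M * κ t) ≤ r / (2 * M) * (2 * M * κ t) := by gcongr
    have e : r / (2 * M) * (2 * M * κ t) = R := by rw [hR]; field_simp
    linarith

theorem quadratic_superlinear {κ : ℝ → ℝ} {b : ℝ → X}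
    (h : ∃ a > (0:ℝ), ∃ b₀ c₀ : ℝ, ∀ r : ℝ, 0 < r →
        ENNReal.ofReal (a * r ^ 2 + b₀ * r + c₀) ≤ divKappa κ b r) :
    Tendsto (fun r : ℝ => divKappa κ b r / ENNReal.ofReal r) atTop (nhds ⊤) := by
  obtain ⟨a, ha, b₀, c₀, h⟩ := h
  have lim : Tendsto (fun r : ℝ => a * r + (b₀ - |c₀|)) atTop atTop :=
    tendsto_atTop_add_const_right _ _ (tendsto_id.const_mul_atTop ha)
  have lim2 : Tendsto (fun r : ℝ => ENNReal.ofReal (a * r + (b₀ - |c₀|))) atTop (nhds ⊤) :=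
    ENNReal.tendsto_ofReal_atTop.comp lim
  refine tendsto_nhds_top_mono lim2 ?_
  filter_upwards [eventually_ge_atTop (1:ℝ)] with r hr
  have hr0 : 0 < r := by linarith
  rw [ENNReal.le_div_iff_mul_le (Or.inl (by simpa using hr0)) (Or.inl ENNReal.ofReal_ne_top)]
  rw [← ENNReal.ofReal_mul' hr0.le]
  refine le_trans (ENNReal.ofReal_le_ofReal ?_) (h r hr0)
  have : |c₀| ≤ |c₀| * r := le_mul_of_one_le_right (abs_nonneg _) hr
  have := neg_abs_le c₀
  nlinarith

end quadratic
/-- Theorem A. For a geodesic ray `b` in a proper CAT(0) space, the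
following are equivalent: (1) `b` is `κ`-contracting; (2) the κ-lower divergence of `b`
is superlinear; (3) the κ-lower divergence of `b` is at least quadratic; (4) `b` is
`κ`-slim. -/
theorem contracting_tfae
    {X : Type*} [MetricSpace X] [ProperSpace X] (hX : IsCAT0 X)
    (o : X) (κ : ℝ → ℝ) (hκ : IsSublinearFn κ)
    (b : ℝ → X) (hb : IsGeodesicRay b) (hb0 : b 0 = o)
    (π : X → X) (hπ : IsProj b π) :
    (KappaContracting κ o b π ↔
      Tendsto (fun r : ℝ => divKappa κ b r / ENNReal.ofReal r) atTop (nhds ⊤)) ∧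
    (KappaContracting κ o b π ↔
      ∃ a > (0:ℝ), ∃ b₀ c₀ : ℝ, ∀ r : ℝ, 0 < r →
        ENNReal.ofReal (a * r ^ 2 + b₀ * r + c₀) ≤ divKappa κ b r) ∧
    (KappaContracting κ o b π ↔ SlimCond1 κ o b π) := by
  subst hb0
  have h12 := contracting_quadratic hX hκ hb hπ
  have h23 := quadratic_superlinear (κ := κ) (b := b)
  have h34 := superlinear_slim hX hκ hb hπ
  have h41 := slim_contracting hX hκ hb hπ
  exact ⟨⟨fun h => h23 (h12 h), fun h => h41 (h34 h)⟩,
    ⟨h12, fun h => h41 (h34 (h23 h))⟩, ⟨fun h => h34 (h23 (h12 h)), h41⟩⟩
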